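/- arXiv:1701.08949 — 2 statements merged into one kernel-verified Lean document; each statement's English description precedes it below -/
import Mathlib

section
/- Let V be a variety with a weak f-term and A ∈ V. If θ,θ₁,…,θₙ are congruences of A with each θ_i ≤ θ and f(θ) = 0_A, then the congruence of A generated by T^θ_{n,f}(θ₁,…,θₙ) equals the higher commutator [θ₁,…,θₙ]. -/
set_option autoImplicit false

namespace UA

/-- A signature: a type of operation symbols, each with a finite arity. -/
structure Signature : Type 1 where
  ops : Type
  arity : ops → ℕ

/-- An algebra for a signature: a carrier set together with an interpretation
of every operation symbol. -/
structure Algebra (σ : Signature) : Type 1 where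
  carrier : Type
  interp : (o : σ.ops) → (Fin (σ.arity o) → carrier) → carrier

variable {σ : Signature}

/-- A congruence of an algebra: an equivalence relation compatible with all
basic operations. -/
structure Con (A : Algebra σ) : Type where
  r : A.carrier → A.carrier → Prop
  refl : ∀ a, r a a
  symm : ∀ {a b}, r a b → r b a
  trans : ∀ {a b c}, r a b → r b c → r a c
  compat : ∀ (o : σ.ops) (x y : Fin (σ.arity o) → A.carrier),
      (∀ i, r (x i) (y i)) → r (A.interp o x) (A.interp o y)

namespace Con

variable {A : Algebra σ}

instance : LE (Con A) := ⟨fun c d => ∀ a b : A.carrier, c.r a b → d.r a b⟩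
instance : LT (Con A) := ⟨fun c d => c ≤ d ∧ ¬ d ≤ c⟩

/-- The total congruence `1_A`. -/
def top : Con A where
  r := fun _ _ => True
  refl := fun _ => trivial
  symm := fun _ => trivial
  trans := fun _ _ => trivial
  compat := fun _ _ _ _ => trivial

/-- The identity congruence `0_A`. -/
def bot : Con A where
  r := fun a b => a = b
  refl := fun _ => rfl
  symm := fun h => h.symm
  trans := fun h h' => h.trans h'
  compat := fun o _ _ h => congrArg (A.interp o) (funext h)

/-- Meet of an arbitrary family of congruences (intersection). -/
def sInf (S : Set (Con A)) : Con A where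
  r a b := ∀ c ∈ S, c.r a b
  refl a c _ := c.refl a
  symm h c hc := c.symm (h c hc)
  trans h h' c hc := c.trans (h c hc) (h' c hc)
  compat o x y h c hc := c.compat o x y (fun i => h i c hc)

/-- Binary meet of congruences. -/
def inf (c d : Con A) : Con A where
  r a b := c.r a b ∧ d.r a b
  refl a := ⟨c.refl a, d.refl a⟩
  symm h := ⟨c.symm h.1, d.symm h.2⟩
  trans h h' := ⟨c.trans h.1 h'.1, d.trans h.2 h'.2⟩
  compat o x y h := ⟨c.compat o x y fun i => (h i).1, d.compat o x y fun i => (h i).2⟩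

/-- The congruence generated by a set of pairs. -/
def conGen (S : Set (A.carrier × A.carrier)) : Con A :=
  sInf {c : Con A | ∀ p ∈ S, c.r p.1 p.2}

/-- Binary join of congruences. -/
def sup (c d : Con A) : Con A := conGen {p | c.r p.1 p.2 ∨ d.r p.1 p.2}

/-- Join of a family of congruences. -/
def iSup {I : Type} (f : I → Con A) : Con A := conGen {p | ∃ i, (f i).r p.1 p.2}

/-- Composition of congruences as binary relations. -/
def comp (c d : Con A) (a b : A.carrier) : Prop := ∃ x, c.r a x ∧ d.r x b

/-- `d` covers `c` in the congruence lattice. -/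
def Covers (c d : Con A) : Prop := c < d ∧ ∀ e : Con A, c < e → e ≤ d → e = d

theorem le_sup_right {c d : Con A} : d ≤ sup c d :=
  fun a b h e he => he (a, b) (Or.inr h)

def toSetoid (c : Con A) : Setoid A.carrier := ⟨c.r, ⟨c.refl, c.symm, c.trans⟩⟩

end Con

/-- The quotient algebra `A/γ`. -/
noncomputable def quotAlg (A : Algebra σ) (γ : Con A) : Algebra σ where
  carrier := Quotient γ.toSetoid
  interp o x := Quotient.mk γ.toSetoid (A.interp o (fun i => (x i).out))

/-- The quotient congruence `α/γ` for `γ ≤ α`. -/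
noncomputable def Con.quot {A : Algebra σ} (α γ : Con A) (h : γ ≤ α) : Con (quotAlg A γ) where
  r x y := Quotient.liftOn₂ x y (fun a b => α.r a b)
    (fun a b a' b' ha hb => propext
      ⟨fun hr => α.trans (α.symm (h _ _ ha)) (α.trans hr (h _ _ hb)),
       fun hr => α.trans (h _ _ ha) (α.trans hr (α.symm (h _ _ hb)))⟩)
  refl x := Quotient.inductionOn x fun a => α.refl a
  symm {x y} h' := Quotient.inductionOn₂ x y (fun _ _ hab => α.symm hab) h'
  trans {x y z} h1 h2 :=
    Quotient.inductionOn₃ x y z (fun _ _ _ hab hbc => α.trans hab hbc) h1 h2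
  compat o x y hxy := by
    show α.r (A.interp o fun i => (x i).out) (A.interp o fun i => (y i).out)
    refine α.compat o _ _ fun i => ?_
    have h1 := hxy i
    rw [← Quotient.out_eq (x i), ← Quotient.out_eq (y i)] at h1
    exact h1

/-- The polynomial operations of an algebra: the clone generated by the basic
operations, the projections and the constants. -/
inductive IsPolynomial (A : Algebra σ) : {n : ℕ} → ((Fin n → A.carrier) → A.carrier) → Prop
  | proj {n : ℕ} (i : Fin n) : IsPolynomial A (fun x => x i)
  | const {n : ℕ} (a : A.carrier) : IsPolynomial A (fun _ : Fin n → A.carrier => a)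
  | app {n : ℕ} (o : σ.ops) (g : Fin (σ.arity o) → (Fin n → A.carrier) → A.carrier) :
      (∀ j, IsPolynomial A (g j)) → IsPolynomial A (fun x => A.interp o (fun j => g j x))

/-- Substituting, coordinatewise according to the grouping `g` and the choice
vector `ε`, the entries of `b` (where `ε` is `true`) or of `a` (where `ε` is `false`). -/
def chooseVec {β : Type} {N n : ℕ} (g : Fin N → Fin n) (a b : Fin N → β)
    (ε : Fin n → Bool) : Fin N → β :=
  fun i => if ε (g i) then b i else a i

/-- The higher centralizer relation `C(α₁,…,αₙ,β;δ)` of Bulatov.  Polynomials with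
grouped variables are modelled by a polynomial `p` of arity `N` together with a
grouping map `g : Fin N → Fin (n+1)`; the group `Fin.last n` is the `β`-group. -/
def Centralizes {A : Algebra σ} {n : ℕ} (α : Fin n → Con A) (β δ : Con A) : Prop :=
  ∀ (N : ℕ) (p : (Fin N → A.carrier) → A.carrier), IsPolynomial A p →
    ∀ (g : Fin N → Fin (n + 1)) (a b : Fin N → A.carrier),
      (∀ i, (Fin.lastCases (motive := fun _ => Con A) β α (g i)).r (a i) (b i)) →
      (∀ ε : Fin n → Bool, ε ≠ (fun _ => true) →
        δ.r (p (chooseVec g a b (Fin.lastCases (motive := fun _ => Bool) false ε)))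
            (p (chooseVec g a b (Fin.lastCases (motive := fun _ => Bool) true ε)))) →
      δ.r (p (chooseVec g a b (Fin.lastCases (motive := fun _ => Bool) false fun _ => true)))
          (p (chooseVec g a b (Fin.lastCases (motive := fun _ => Bool) true fun _ => true)))

/-- The higher commutator `[α₁,…,αₙ,β]`: the smallest congruence `δ` such that
`C(α₁,…,αₙ,β;δ)` holds. -/
def commutator {A : Algebra σ} {n : ℕ} (α : Fin n → Con A) (β : Con A) : Con A :=
  Con.sInf {δ : Con A | Centralizes α β δ}

/-- The higher commutator of a nonempty list of congruences, with the convention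
`[α] = α` for a single congruence. -/
def commList {A : Algebra σ} : {n : ℕ} → (Fin (n + 1) → Con A) → Con A
  | 0, γ => γ 0
  | (n+1), γ => commutator (fun j : Fin (n+1) => γ j.castSucc) (γ (Fin.last (n+1)))

/-- The `m`-fold commutator `[θ,…,θ]_m` (for `m ≥ 1`). -/
def nfold {A : Algebra σ} (θ : Con A) (m : ℕ) : Con A :=
  commList (fun _ : Fin (m - 1 + 1) => θ)

/-- The binary commutator `[c,d]`. -/
def binComm {A : Algebra σ} (c d : Con A) : Con A := commutator (fun _ : Fin 1 => c) d

/-- The lower central series `(θ]ⁿ`. -/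
def lcs {A : Algebra σ} (θ : Con A) : ℕ → Con A
  | 0 => θ
  | (k+1) => binComm θ (lcs θ k)

/-- The derived series `[θ]ⁿ`. -/
def derived {A : Algebra σ} (θ : Con A) : ℕ → Con A
  | 0 => θ
  | (k+1) => binComm (derived θ k) (derived θ k)

/-- An algebra is nilpotent if some term of the lower central series of `1_A` is `0_A`. -/
def Nilpotent (A : Algebra σ) : Prop := ∃ m, lcs (Con.top : Con A) m = Con.bot

/-- An algebra is nilpotent of class `n` if `(1_A]ⁿ = 0_A`. -/
def NilpotentOfClass (A : Algebra σ) (n : ℕ) : Prop := lcs (Con.top : Con A) n = Con.bot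

/-- A congruence is solvable if some term of its derived series is `0_A`. -/
def SolvableCon {A : Algebra σ} (θ : Con A) : Prop := ∃ m, derived θ m = Con.bot

/-- `A` is `n`-supernilpotent if `[1_A,…,1_A]_n = 0_A`. -/
def Supernilpotent (A : Algebra σ) (n : ℕ) : Prop := nfold (Con.top : Con A) n = Con.bot

/-- A polynomial `f` absorbs the tuple `a` to the element `c`. -/
def Absorbs (A : Algebra σ) {k : ℕ} (f : (Fin k → A.carrier) → A.carrier)
    (a : Fin k → A.carrier) (c : A.carrier) : Prop :=
  ∀ b : Fin k → A.carrier, (∃ i, b i = a i) → f b = c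

/-- Terms over a signature with variables in `X`. -/
inductive Term (σ : Signature) (X : Type) : Type
  | var : X → Term σ X
  | app : (o : σ.ops) → (Fin (σ.arity o) → Term σ X) → Term σ X

/-- Evaluation of a term in an algebra under an assignment of the variables. -/
def Term.eval {X : Type} (A : Algebra σ) (v : X → A.carrier) : Term σ X → A.carrier
  | Term.var x => v x
  | Term.app o t => A.interp o fun i => Term.eval A v (t i)

/-- Substitution of terms into a term. -/
def Term.subst {X Y : Type} : Term σ X → (X → Term σ Y) → Term σ Y
  | Term.var x, s => s x
  | Term.app o t, s => Term.app o fun i => Term.subst (t i) s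

/-- `A` possesses a Mal'cev term. -/
def HasMalcevTerm (A : Algebra σ) : Prop :=
  ∃ t : Term σ (Fin 3), ∀ a b : A.carrier,
    t.eval A ![a, b, b] = a ∧ t.eval A ![b, b, a] = a

/-- A class of algebras is a variety when it is the class of all models of a set
of identities. -/
def IsVariety (V : Algebra σ → Prop) : Prop :=
  ∃ E : Set (Term σ ℕ × Term σ ℕ),
    ∀ A : Algebra σ, V A ↔ ∀ e ∈ E, ∀ v : ℕ → A.carrier, e.1.eval A v = e.2.eval A v

/-- Two terms are `V`-equivalent when they evaluate equally in every member of `V`. -/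
def vSetoid (V : Algebra σ → Prop) (X : Type) : Setoid (Term σ X) where
  r t s := ∀ A : Algebra σ, V A → ∀ v : X → A.carrier, t.eval A v = s.eval A v
  iseqv := ⟨fun _ _ _ _ => rfl, fun h A hA v => (h A hA v).symm,
    fun h h' A hA v => (h A hA v).trans (h' A hA v)⟩

/-- The `V`-free algebra on the set `X` of generators. -/
noncomputable def freeAlg (V : Algebra σ → Prop) (X : Type) : Algebra σ where
  carrier := Quotient (vSetoid V X)
  interp o x := Quotient.mk (vSetoid V X) (Term.app o fun i => (x i).out)

/-- The principal congruence `θ(a,b)` generated by the pair `(a,b)`. -/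
def conPair (A : Algebra σ) (a b : A.carrier) : Con A := Con.conGen {(a, b)}

/-- A weak difference term for the class `V`. -/
def IsWeakDiffTerm (V : Algebra σ → Prop) (c : Term σ (Fin 3)) : Prop :=
  ∀ A : Algebra σ, V A → ∀ a b : A.carrier,
    (binComm (conPair A a b) (conPair A a b)).r (c.eval A ![a, b, b]) a ∧
    (binComm (conPair A a b) (conPair A a b)).r a (c.eval A ![b, b, a])

/-- A weak `n`-difference term for the class `V`. -/
def IsWeakNDiffTerm (V : Algebra σ → Prop) (n : ℕ) (c : Term σ (Fin 3)) : Prop :=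
  ∀ A : Algebra σ, V A → ∀ a b : A.carrier,
    (nfold (conPair A a b) n).r (c.eval A ![a, b, b]) a ∧
    (nfold (conPair A a b) n).r a (c.eval A ![b, b, a])

/-- Order-preserving maps on the congruence lattice. -/
def MonotoneCon {A : Algebra σ} (F : Con A → Con A) : Prop :=
  ∀ c d : Con A, c ≤ d → F c ≤ F d

/-- `p` is a weak `f`-term of `A` with respect to the interpretation `F`. -/
def IsWeakFTerm (A : Algebra σ) (F : Con A → Con A) (p : Term σ (Fin 3)) : Prop :=
  ∀ (θ : Con A) (a b : A.carrier), θ.r a b →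
    (F θ).r (p.eval A ![a, b, b]) a ∧ (F θ).r a (p.eval A ![b, b, a])

/-- `p` is a weak `f`-term for the class `V`. -/
def HasWeakFTermVariety (V : Algebra σ → Prop) (p : Term σ (Fin 3)) : Prop :=
  ∀ A : Algebra σ, V A → ∃ F : Con A → Con A, MonotoneCon F ∧ IsWeakFTerm A F p

/-- The set `T^θ_{n,f}(θ₁,…,θₙ)` of pairs coming from polynomials which
`f(θ)`-absorb on the cube `{ā₁,b̄₁}×⋯×{āₙ,b̄ₙ}`. -/
def TSet (A : Algebra σ) (F : Con A → Con A) (θ : Con A) {n : ℕ} (θs : Fin n → Con A) :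
    Set (A.carrier × A.carrier) :=
  {pr | ∃ (N : ℕ) (g : (Fin N → A.carrier) → A.carrier), IsPolynomial A g ∧
    ∃ (gr : Fin N → Fin n) (a b : Fin N → A.carrier),
      (∀ i, (θs (gr i)).r (a i) (b i)) ∧
      (∀ ε : Fin n → Bool, (∃ j, ε j = false) →
        (F θ).r (g (fun i => if ε (gr i) then b i else a i)) (g a)) ∧
      pr = (g b, g a)}

/-- Homomorphisms of algebras. -/
def IsHom (A B : Algebra σ) (h : A.carrier → B.carrier) : Prop :=
  ∀ (o : σ.ops) (x : Fin (σ.arity o) → A.carrier),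
    h (A.interp o x) = B.interp o (fun i => h (x i))

/-- The product of a family of algebras. -/
def prodAlg {I : Type} (As : I → Algebra σ) : Algebra σ where
  carrier := ∀ i, (As i).carrier
  interp o x i := (As i).interp o (fun j => x j i)

/-- The subuniverse generated by a subset. -/
inductive Gen (A : Algebra σ) (S : Set A.carrier) : A.carrier → Prop
  | base {a : A.carrier} : a ∈ S → Gen A S a
  | app (o : σ.ops) (x : Fin (σ.arity o) → A.carrier) :
      (∀ i, Gen A S (x i)) → Gen A S (A.interp o x)

/-- `A` possesses a Taylor term. -/
def HasTaylorTerm (A : Algebra σ) : Prop :=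
  ∃ (n : ℕ) (t : Term σ (Fin n)), 1 ≤ n ∧
    (∀ a : A.carrier, t.eval A (fun _ => a) = a) ∧
    ∀ i : Fin n, ∃ u v : Fin n → Bool, u i = true ∧ v i = false ∧
      ∀ x y : A.carrier,
        t.eval A (fun j => if u j then x else y) = t.eval A (fun j => if v j then x else y)

/-- The variety `V` possesses a Taylor term. -/
def VarietyHasTaylorTerm (V : Algebra σ → Prop) : Prop :=
  ∃ (n : ℕ) (t : Term σ (Fin n)), 1 ≤ n ∧
    (∀ A : Algebra σ, V A → ∀ a : A.carrier, t.eval A (fun _ => a) = a) ∧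
    ∀ i : Fin n, ∃ u v : Fin n → Bool, u i = true ∧ v i = false ∧
      ∀ A : Algebra σ, V A → ∀ x y : A.carrier,
        t.eval A (fun j => if u j then x else y) = t.eval A (fun j => if v j then x else y)

/-- `Ξ(θ)`: the smallest set of congruences containing `θ` and closed under
higher commutators (of arity at least 2) of its members. -/
inductive Xi {A : Algebra σ} (θ : Con A) : Con A → Prop
  | base : Xi θ θ
  | comm {k : ℕ} (γ : Fin (k + 2) → Con A) : (∀ j, Xi θ (γ j)) → Xi θ (commList γ)

/-- An expanded loop on the carrier `α` with extra operations indexed by `ι`. -/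
structure ExpLoop (ι : Type) (ar : ι → ℕ) (α : Type) : Type where
  mul : α → α → α
  ldiv : α → α → α
  rdiv : α → α → α
  zero : α
  extra : (i : ι) → (Fin (ar i) → α) → α
  ldiv_mul : ∀ x y, ldiv x (mul x y) = y
  mul_rdiv : ∀ x y, rdiv (mul x y) y = x
  mul_ldiv : ∀ x y, mul x (ldiv x y) = y
  rdiv_mul : ∀ x y, mul (rdiv x y) y = x
  zero_mul : ∀ x, mul zero x = x
  mul_zero : ∀ x, mul x zero = x

/-- Operation symbols of an expanded loop. -/
inductive LoopOp (ι : Type) : Type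
  | mul | ldiv | rdiv | zero
  | extra : ι → LoopOp ι

/-- The signature of an expanded loop. -/
@[reducible] def loopSig (ι : Type) (ar : ι → ℕ) : Signature where
  ops := LoopOp ι
  arity o := match o with
    | .mul => 2
    | .ldiv => 2
    | .rdiv => 2
    | .zero => 0
    | .extra i => ar i

/-- The algebra underlying an expanded loop. -/
def ExpLoop.toAlgebra {ι : Type} {ar : ι → ℕ} {α : Type} (L : ExpLoop ι ar α) :
    Algebra (loopSig ι ar) where
  carrier := α
  interp o := match o with
    | .mul => fun x => L.mul (x 0) (x 1)
    | .ldiv => fun x => L.ldiv (x 0) (x 1)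
    | .rdiv => fun x => L.rdiv (x 0) (x 1)
    | .zero => fun _ => L.zero
    | .extra i => L.extra i

/-- An expanded loop is of `n`-type. -/
def ExpLoop.IsNType {ι : Type} {ar : ι → ℕ} {α : Type} (L : ExpLoop ι ar α) (n : ℕ) : Prop :=
  (∀ p : Σ k : ℕ, (Fin k → α) → α,
      (∃ i : ι, p = ⟨ar i, L.extra i⟩) ↔
        (1 ≤ p.1 ∧ p.1 ≤ n - 1 ∧ IsPolynomial L.toAlgebra p.2 ∧
          Absorbs L.toAlgebra p.2 (fun _ => L.zero) L.zero)) ∧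
  (∀ f : (Fin (n - 1) → α) → α,
      IsPolynomial L.toAlgebra f → Absorbs L.toAlgebra f (fun _ => L.zero) L.zero →
      ∀ (j : Fin (n - 1)) (x : Fin (n - 1) → α) (u v : α),
        f (Function.update x j (L.mul u v)) =
          L.mul (f (Function.update x j u)) (f (Function.update x j v))) ∧
  (∀ k : ℕ, 2 ≤ k → k < n →
      commList (Fin.snoc (fun _ : Fin (n - k) => (Con.top : Con L.toAlgebra))
        (nfold Con.top k)) = Con.bot)

/-- `A` is polynomially equivalent to an `n`-type expanded loop on the same carrier. -/
def PolyEquivNTypeLoop (A : Algebra σ) (n : ℕ) : Prop :=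
  ∃ (ι : Type) (ar : ι → ℕ) (L : ExpLoop ι ar A.carrier),
    L.IsNType n ∧
    ∀ (k : ℕ) (f : (Fin k → A.carrier) → A.carrier),
      IsPolynomial A f ↔ IsPolynomial L.toAlgebra f

/-- Left-associated product of a list with initial value `c`. -/
def lprodFrom {β : Type} (mul : β → β → β) (c : β) (l : List β) : β := List.foldl mul c l

/-- Left-associated product of a list (with a default value for the empty list). -/
def lprodList {β : Type} (mul : β → β → β) (dflt : β) : List β → β
  | [] => dflt
  | a :: l => List.foldl mul a l

/-- Left-associated product of a nonempty tuple. -/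
def lassoc {β : Type} (mul : β → β → β) : {m : ℕ} → (Fin (m + 1) → β) → β
  | 0, y => y 0
  | (m+1), y => mul (lassoc mul (Fin.init y)) (y (Fin.last (m+1)))

/-- `A` has a representation of degree `n`. -/
def HasRepOfDegree (A : Algebra σ) (n : ℕ) : Prop :=
  ∃ (z : A.carrier) (r : (Fin 2 → A.carrier) → A.carrier),
    IsPolynomial A r ∧ (∀ x : A.carrier, r ![z, x] = x) ∧ (∀ x : A.carrier, r ![x, z] = x) ∧
    ∀ (k : ℕ) (f : (Fin k → A.carrier) → A.carrier), IsPolynomial A f →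
      ∃ (c : A.carrier) (R : ℕ → (Fin k → A.carrier) → A.carrier),
        (∀ m : ℕ, 1 ≤ m → m ≤ min k n →
          ∃ (l : List (Finset (Fin k)))
            (t : (S : Finset (Fin k)) → (Fin S.card → A.carrier) → A.carrier),
            l.Nodup ∧
            (∀ S : Finset (Fin k), S ∈ l ↔ S.card = m) ∧
            (∀ S ∈ l, IsPolynomial A (t S) ∧ Absorbs A (t S) (fun _ => z) z) ∧
            (∀ x : Fin k → A.carrier,
              R m x = lprodList (fun u v => r ![u, v]) z
                (l.map (fun S => t S (fun j => x ((S.orderIsoOfFin rfl j).val)))))) ∧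
        ∀ x : Fin k → A.carrier,
          f x = lprodFrom (fun u v => r ![u, v]) c
            ((List.range' 1 (min k n)).map (fun m => R m x))

/-- Products of `0`-absorbing polynomials (of arities between `lo` and `hi`)
in a given set of variables. -/
inductive ProdOfAbs {ι : Type} {ar : ι → ℕ} {α : Type} (L : ExpLoop ι ar α)
    (lo hi : ℕ) {I : Type} : ((I → α) → α) → Prop
  | base {p : ℕ} (h : (Fin p → α) → α) (sel : Fin p → I) :
      lo ≤ p → p ≤ hi → IsPolynomial L.toAlgebra h →
      Absorbs L.toAlgebra h (fun _ => L.zero) L.zero →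
      ProdOfAbs L lo hi (fun v => h (fun j => v (sel j)))
  | mul {F G : (I → α) → α} :
      ProdOfAbs L lo hi F → ProdOfAbs L lo hi G →
      ProdOfAbs L lo hi (fun v => L.mul (F v) (G v))

/-- The terms `q_m` (for `m ≥ 2`, `qSeq q (m-2)` is `q_m`):
`q₂ := q`, `q_{m+1}(x,y,z) := q(x, q_m(x,y,y), q_m(x,y,z))`. -/
def qSeq (q : Term σ (Fin 3)) : ℕ → Term σ (Fin 3)
  | 0 => q
  | (k+1) => q.subst ![Term.var 0, (qSeq q k).subst ![Term.var 0, Term.var 1, Term.var 1], qSeq q k]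


theorem Con.ext_r {A : Algebra σ} {c d : Con A} (h : ∀ a b, c.r a b ↔ d.r a b) : c = d := by
  cases c with
  | mk r _ _ _ _ =>
    cases d with
    | mk r' _ _ _ _ =>
      have : r = r' := funext fun a => funext fun b => propext (h a b)
      subst this
      rfl

theorem IsPolynomial.congr_con {A : Algebra σ} (c : Con A) {n : ℕ}
    {f : (Fin n → A.carrier) → A.carrier} (hf : IsPolynomial A f) :
    ∀ x y : Fin n → A.carrier, (∀ i, c.r (x i) (y i)) → c.r (f x) (f y) := by
  induction hf with
  | proj i => exact fun x y h => h i
  | const a => exact fun x y _ => c.refl a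
  | app o g _ ih => exact fun x y h => c.compat o _ _ fun j => ih j x y h

theorem IsPolynomial.substPoly {A : Algebra σ} {n k : ℕ}
    {f : (Fin n → A.carrier) → A.carrier} (hf : IsPolynomial A f)
    (s : Fin n → (Fin k → A.carrier) → A.carrier) (hs : ∀ i, IsPolynomial A (s i)) :
    IsPolynomial A (fun x => f (fun i => s i x)) := by
  induction hf with
  | proj i => exact hs i
  | const a => exact IsPolynomial.const a
  | app o g _ ih => exact IsPolynomial.app o (fun j x => g j (fun i => s i x)) fun j => ih j

theorem Term.eval_poly {A : Algebra σ} {X : Type} {k : ℕ} (t : Term σ X)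
    (s : X → (Fin k → A.carrier) → A.carrier) (hs : ∀ i, IsPolynomial A (s i)) :
    IsPolynomial A (fun x => t.eval A (fun i => s i x)) := by
  induction t with
  | var x => exact hs x
  | app o t ih =>
    exact IsPolynomial.app o (fun j x => (t j).eval A (fun i => s i x)) fun j => ih j

theorem Term.eval_con {A : Algebra σ} {X : Type} (c : Con A) (t : Term σ X)
    (v w : X → A.carrier) (h : ∀ i, c.r (v i) (w i)) : c.r (t.eval A v) (t.eval A w) := by
  induction t with
  | var x => exact h x
  | app o t ih => exact c.compat o _ _ fun j => ih j

theorem eval3_con {A : Algebra σ} (c : Con A) (t : Term σ (Fin 3))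
    {x y z x' y' z' : A.carrier} (hx : c.r x x') (hy : c.r y y') (hz : c.r z z') :
    c.r (t.eval A ![x, y, z]) (t.eval A ![x', y', z']) := by
  refine Term.eval_con c t _ _ fun i => ?_
  fin_cases i
  · exact hx
  · exact hy
  · exact hz

/-- The polynomial `p(q(x), q(x with group j set to a), c)`. -/
def stepPoly {A : Algebra σ} (p : Term σ (Fin 3)) {N k : ℕ} (gr : Fin N → Fin k)
    (a : Fin N → A.carrier) (c : A.carrier) (j : Fin k)
    (q : (Fin N → A.carrier) → A.carrier) : (Fin N → A.carrier) → A.carrier :=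
  fun x => p.eval A ![q x, q (fun i => if gr i = j then a i else x i), c]

theorem stepPoly_poly {A : Algebra σ} (p : Term σ (Fin 3)) {N k : ℕ} (gr : Fin N → Fin k)
    (a : Fin N → A.carrier) (c : A.carrier) (j : Fin k)
    {q : (Fin N → A.carrier) → A.carrier} (hq : IsPolynomial A q) :
    IsPolynomial A (stepPoly p gr a c j q) := by
  have h2 : IsPolynomial A (fun x : Fin N → A.carrier =>
      q (fun i => if gr i = j then a i else x i)) := by
    refine hq.substPoly (fun i x => if gr i = j then a i else x i) fun i => ?_
    by_cases h : gr i = j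
    · simp only [h, if_true]; exact IsPolynomial.const _
    · simp only [h, if_false]; exact IsPolynomial.proj _
  have := Term.eval_poly p (A := A) (k := N)
    ![q, fun x => q (fun i => if gr i = j then a i else x i), fun _ => c] (by
      intro i
      fin_cases i
      · exact hq
      · exact h2
      · exact IsPolynomial.const _)
  convert this using 1
  funext x
  unfold stepPoly
  congr 1
  funext i
  fin_cases i <;> rfl

theorem stepPoly_choose {A : Algebra σ} (p : Term σ (Fin 3)) {N k : ℕ} (gr : Fin N → Fin k)
    (a b : Fin N → A.carrier) (c : A.carrier) (j : Fin k)
    (q : (Fin N → A.carrier) → A.carrier) (ε : Fin k → Bool) :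
    stepPoly p gr a c j q (chooseVec gr a b ε) =
      p.eval A ![q (chooseVec gr a b ε),
        q (chooseVec gr a b (Function.update ε j false)), c] := by
  unfold stepPoly
  have : (fun i => if gr i = j then a i else chooseVec gr a b ε i) =
      chooseVec gr a b (Function.update ε j false) := by
    funext i
    by_cases h : gr i = j <;> simp [chooseVec, h, Function.update_apply]
  rw [this]

theorem core_absorb {A : Algebra σ} (p : Term σ (Fin 3)) (θ δ : Con A)
    (hp : ∀ u v, θ.r u v → p.eval A ![u, v, v] = u ∧ p.eval A ![v, v, u] = u)
    {N k : ℕ} (l : Fin k) (gr : Fin N → Fin k) (a b : Fin N → A.carrier)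
    (hab : ∀ i, θ.r (a i) (b i)) (t : (Fin N → A.carrier) → A.carrier) (ht : IsPolynomial A t)
    (h : ∀ ε : Fin k → Bool, (∃ j, j ≠ l ∧ ε j = false) →
      δ.r (t (chooseVec gr a b (Function.update ε l false)))
        (t (chooseVec gr a b (Function.update ε l true))))
    (c : A.carrier)
    (hc : c = t (chooseVec gr a b (Function.update (fun _ => true) l false)))
    (S : Finset (Fin k)) :
    ∃ q : (Fin N → A.carrier) → A.carrier, IsPolynomial A q ∧
      (∀ ε, θ.r (q (chooseVec gr a b ε)) c) ∧
      (∀ ε : Fin k → Bool, (ε l = false ∨ ∃ j ∈ S, ε j = false) → q (chooseVec gr a b ε) = c) ∧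
      (∀ ε : Fin k → Bool, (∃ j, ε j = false) → δ.r (q (chooseVec gr a b ε)) c) ∧
      δ.r (q (chooseVec gr a b fun _ => true)) (t (chooseVec gr a b fun _ => true)) := by
  have hccc : p.eval A ![c, c, c] = c := (hp c c (θ.refl c)).1
  induction S using Finset.induction_on with
  | empty =>
    have htc : ∀ ε, θ.r (t (chooseVec gr a b ε)) c := by
      intro ε
      rw [hc]
      refine ht.congr_con θ _ _ fun i => ?_
      unfold chooseVec
      split_ifs
      · exact θ.refl _
      · exact θ.symm (hab i)
      · exact hab i
      · exact θ.refl _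
    have hl : ∀ ε : Fin k → Bool, ε l = false →
        stepPoly p gr a c l t (chooseVec gr a b ε) = c := by
      intro ε hε
      have : Function.update ε l false = ε := by rw [← hε]; exact Function.update_eq_self l ε
      rw [stepPoly_choose, this]
      exact (hp _ _ (θ.symm (htc ε))).2
    refine ⟨stepPoly p gr a c l t, stepPoly_poly p gr a c l ht, ?_, ?_, ?_, ?_⟩
    · intro ε
      rw [stepPoly_choose]
      have := eval3_con θ p (htc ε) (htc (Function.update ε l false)) (θ.refl c)
      rwa [hccc] at this
    · rintro ε (hε | ⟨j, hj, _⟩)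
      · exact hl ε hε
      · simp at hj
    · rintro ε ⟨j, hj⟩
      cases hε : ε l with
      | false => rw [hl ε hε]; exact δ.refl c
      | true =>
        have hjl : j ≠ l := by rintro rfl; simp [hj] at hε
        have h1 := h ε ⟨j, hjl, hj⟩
        have : Function.update ε l true = ε := by rw [← hε]; exact Function.update_eq_self l ε
        rw [this] at h1
        rw [stepPoly_choose]
        have h2 := eval3_con δ p (δ.symm h1)
          (δ.refl (t (chooseVec gr a b (Function.update ε l false)))) (δ.refl c)
        rwa [(hp _ _ (θ.symm (htc (Function.update ε l false)))).2] at h2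
    · rw [stepPoly_choose, ← hc, (hp _ _ (htc _)).1]
      exact δ.refl _
  | insert j S _ ih =>
    obtain ⟨q, hq, h1, h2, h3, h4⟩ := ih
    refine ⟨stepPoly p gr a c j q, stepPoly_poly p gr a c j hq, ?_, ?_, ?_, ?_⟩
    · intro ε
      rw [stepPoly_choose]
      have := eval3_con θ p (h1 ε) (h1 (Function.update ε j false)) (θ.refl c)
      rwa [hccc] at this
    · intro ε hε
      rw [stepPoly_choose]
      by_cases hj : ε j = false
      · have : Function.update ε j false = ε := by rw [← hj]; exact Function.update_eq_self j ε
        rw [this]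
        exact (hp _ _ (θ.symm (h1 ε))).2
      · have key : ∃ i, (i = l ∨ i ∈ S) ∧ ε i = false := by
          rcases hε with hε | ⟨i, hi, hε⟩
          · exact ⟨l, Or.inl rfl, hε⟩
          · rcases Finset.mem_insert.1 hi with rfl | hi
            · exact absurd hε hj
            · exact ⟨i, Or.inr hi, hε⟩
        have all : ∀ ε' : Fin k → Bool, (∃ i, (i = l ∨ i ∈ S) ∧ ε' i = false) →
            q (chooseVec gr a b ε') = c := by
          rintro ε' ⟨i, rfl | hi, hε'⟩
          · exact h2 ε' (Or.inl hε')
          · exact h2 ε' (Or.inr ⟨i, hi, hε'⟩)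
        rw [all ε key, all (Function.update ε j false) ?_, hccc]
        obtain ⟨i, hi, hε'⟩ := key
        refine ⟨i, hi, ?_⟩
        rw [Function.update_apply]
        split_ifs <;> simp [hε']
    · intro ε hε
      rw [stepPoly_choose]
      have := eval3_con δ p (h3 ε hε) (h3 (Function.update ε j false) ⟨j, by simp⟩) (δ.refl c)
      rwa [hccc] at this
    · rw [stepPoly_choose]
      have := eval3_con δ p (δ.refl (q (chooseVec gr a b fun _ => true)))
        (h3 (Function.update (fun _ => true) j false) ⟨j, by simp⟩) (δ.refl c)
      rw [(hp _ _ (h1 _)).1] at this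
      exact δ.trans this h4

theorem chooseVec_false {β : Type} {N n : ℕ} (g : Fin N → Fin n) (a b : Fin N → β) :
    chooseVec g a b (fun _ => false) = a := by funext i; simp [chooseVec]

theorem chooseVec_true {β : Type} {N n : ℕ} (g : Fin N → Fin n) (a b : Fin N → β) :
    chooseVec g a b (fun _ => true) = b := by funext i; simp [chooseVec]

theorem lastCases_true {n : ℕ} : (Fin.lastCases (motive := fun _ : Fin (n + 1) => Bool) true
    fun _ => true) = fun _ => true := by
  funext i
  refine Fin.lastCases ?_ (fun i => ?_) i <;> simp

theorem lastCases_update {n : ℕ} (ε : Fin (n + 1) → Bool) (v : Bool) :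
    (Fin.lastCases (motive := fun _ : Fin (n + 1) => Bool) v fun j => ε j.castSucc) =
      Function.update ε (Fin.last n) v := by
  funext i
  refine Fin.lastCases ?_ (fun i => ?_) i <;> simp [Function.update_apply, Fin.castSucc_ne_last]

theorem lastCases_con {A : Algebra σ} {n : ℕ} (γ : Fin (n + 1) → Con A) (i : Fin (n + 1)) :
    Fin.lastCases (motive := fun _ => Con A) (γ (Fin.last n)) (fun j => γ j.castSucc) i = γ i := by
  refine Fin.lastCases ?_ (fun i => ?_) i <;> simp

/-- Proposition 5.7 of "On Supernilpotent Algebras": in a variety with a weak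
`f`-term, if each `θᵢ ≤ θ` and `f(θ) = 0`, then the congruence generated by
`T^θ_{n,f}(θ₁,…,θₙ)` is exactly the higher commutator `[θ₁,…,θₙ]`. -/
theorem tset_generates_commutator {σ : Signature} (V : Algebra σ → Prop)
    (hV : IsVariety V) (p : Term σ (Fin 3)) (hp : HasWeakFTermVariety V p)
    (A : Algebra σ) (hA : V A)
    (F : Con A → Con A) (hFmono : MonotoneCon F) (hF : IsWeakFTerm A F p)
    {m : ℕ} (θ : Con A) (θs : Fin (m + 1) → Con A)
    (hθs : ∀ i, θs i ≤ θ) (hbot : F θ = Con.bot) :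
    Con.conGen (TSet A F θ θs) = commList θs := by
  have hmal : ∀ u v, θ.r u v → p.eval A ![u, v, v] = u ∧ p.eval A ![v, v, u] = u := by
    intro u v huv
    have h := hF θ u v huv
    rw [hbot] at h
    exact ⟨h.1, h.2.symm⟩
  have hT : ∀ x y, (x, y) ∈ TSet A F θ θs → (Con.conGen (TSet A F θ θs)).r x y :=
    fun x y h c hc => hc (x, y) h
  apply Con.ext_r
  intro x y
  cases m with
  | zero =>
    constructor
    · intro h
      refine h (θs 0) ?_
      rintro _ ⟨N, g, hg, gr, a, b, hab, _, rfl⟩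
      refine (θs 0).symm (hg.congr_con (θs 0) a b fun i => ?_)
      have := hab i
      rwa [Fin.eq_zero (gr i)] at this
    · intro h
      change (θs 0).r x y at h
      refine hT x y ⟨1, fun v => v 0, IsPolynomial.proj 0, fun _ => 0, fun _ => y, fun _ => x,
        fun _ => (θs 0).symm h, ?_, rfl⟩
      rintro ε ⟨j, hj⟩
      rw [Fin.eq_zero j] at hj
      simp only [hj]
      exact (F θ).refl _
  | succ n =>
    constructor
    · intro h δ hδ
      refine h δ ?_
      rintro _ ⟨N, g, hg, gr, a, b, hab, habs, rfl⟩
      rw [hbot] at habs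
      have habs' : ∀ ε : Fin (n + 1 + 1) → Bool, (∃ j, ε j = false) →
          g (chooseVec gr a b ε) = g a := habs
      have h1 := hδ N g hg gr a b (fun i => by rw [lastCases_con]; exact hab i) (by
        intro ε hε
        obtain ⟨j, hj⟩ : ∃ j, ε j = false := by
          by_contra hcon
          push Not at hcon
          exact hε (funext fun j => by simpa using hcon j)
        rw [habs' _ ⟨j.castSucc, by simpa using hj⟩, habs' _ ⟨j.castSucc, by simpa using hj⟩]
        exact δ.refl _)
      rw [habs' _ ⟨Fin.last _, by simp⟩, lastCases_true, chooseVec_true] at h1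
      exact δ.symm h1
    · intro h
      refine h _ ?_
      intro N t ht gr a b hab hyp
      have hab' : ∀ i, (θs (gr i)).r (a i) (b i) := by
        intro i
        have := hab i
        rwa [lastCases_con] at this
      obtain ⟨q, hq, h1, h2, h3, h4⟩ := core_absorb p θ (Con.conGen (TSet A F θ θs)) hmal
        (Fin.last (n + 1)) gr a b (fun i => hθs _ _ _ (hab' i)) t ht (by
          rintro ε ⟨j, hjl, hj⟩
          rw [← lastCases_update, ← lastCases_update]
          refine hyp _ fun hcon => ?_
          have := congrFun hcon (j.castPred hjl)
          simp [hj] at this) _ rfl Finset.univ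
      have hup := lastCases_update (fun _ : Fin (n + 1 + 1) => true) false
      rw [lastCases_true, hup]
      have hqa : q a = t (chooseVec gr a b
          (Function.update (fun _ => true) (Fin.last (n + 1)) false)) := by
        have := h2 (fun _ => false) (Or.inl rfl)
        rwa [chooseVec_false] at this
      have hmem : (q b, q a) ∈ TSet A F θ θs := by
        refine ⟨N, q, hq, gr, a, b, hab', ?_, rfl⟩
        rintro ε ⟨j, hj⟩
        have := h2 ε (Or.inr ⟨j, Finset.mem_univ j, hj⟩)
        rw [← hqa] at this
        rw [hbot]
        exact this
      have h5 := hT _ _ hmem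
      rw [chooseVec_true] at h4
      rw [← hqa, chooseVec_true]
      exact Con.trans _ (Con.symm _ h5) h4

end UA
end

section
/- Let V be a variety with a weak f-term, A ∈ V, and let θ,θ₁,…,θₙ be congruences of A with f(θ) ≤ [θ₁,…,θₙ] ≤ θ₁∨⋯∨θₙ ≤ θ. Then: (1) for any congruence γ of A, the centralizer relation C(θ₁,…,θₙ;γ) holds if and only if [θ₁,…,θₙ] ≤ γ; (2) if η ≤ θ₁∧⋯∧θₙ, then in the quotient algebra A/η one has [θ₁/η,…,θₙ/η] = ([θ₁,…,θₙ] ∨ η)/η. -/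
set_option autoImplicit false

namespace UA

variable {σ : Signature}

section Helpers

theorem lastCases_self {β : Type} {n : ℕ} (E : Fin (n + 1) → β) :
    (Fin.lastCases (motive := fun _ => β) (E (Fin.last n)) (fun j => E j.castSucc)) = E := by
  funext k
  induction k using Fin.lastCases with
  | last => simp
  | cast j => simp

theorem IsPolynomial.subst {A : Algebra σ} {N M : ℕ} {q : (Fin N → A.carrier) → A.carrier}
    (hq : IsPolynomial A q) (h : Fin N → (Fin M → A.carrier) → A.carrier)
    (hh : ∀ k, IsPolynomial A (h k)) : IsPolynomial A (fun x => q (fun k => h k x)) := by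
  induction hq with
  | proj i => exact hh i
  | const a => exact IsPolynomial.const a
  | app o g _ ih => exact IsPolynomial.app o (fun j x => g j (fun k => h k x)) ih

theorem IsPolynomial.term {A : Algebra σ} {M : ℕ} {X : Type} (t : Term σ X)
    (h : X → (Fin M → A.carrier) → A.carrier)
    (hh : ∀ k, IsPolynomial A (h k)) : IsPolynomial A (fun x => t.eval A (fun k => h k x)) := by
  induction t with
  | var x => exact hh x
  | app o t ih => exact IsPolynomial.app o (fun j x => (t j).eval A (fun k => h k x)) ih

theorem IsPolynomial.term3 {A : Algebra σ} {M : ℕ} (t : Term σ (Fin 3))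
    {f g h : (Fin M → A.carrier) → A.carrier}
    (hf : IsPolynomial A f) (hg : IsPolynomial A g) (hh : IsPolynomial A h) :
    IsPolynomial A (fun x => t.eval A ![f x, g x, h x]) := by
  have := IsPolynomial.term t ![f, g, h] (by intro k; fin_cases k <;> assumption)
  convert this using 3 with x
  funext k
  fin_cases k <;> rfl

theorem Con.poly {A : Algebra σ} (c : Con A) {N : ℕ} {q : (Fin N → A.carrier) → A.carrier}
    (hq : IsPolynomial A q) (x y : Fin N → A.carrier) (h : ∀ i, c.r (x i) (y i)) :
    c.r (q x) (q y) := by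
  induction hq with
  | proj i => exact h i
  | const a => exact c.refl a
  | app o g _ ih => exact c.compat o _ _ ih

theorem Con.term3 {A : Algebra σ} (c : Con A) (t : Term σ (Fin 3)) {a b d a' b' d' : A.carrier}
    (ha : c.r a a') (hb : c.r b b') (hd : c.r d d') :
    c.r (t.eval A ![a, b, d]) (t.eval A ![a', b', d']) := by
  have h : IsPolynomial A (fun x : Fin 3 → A.carrier => t.eval A x) :=
    IsPolynomial.term t (fun k x => x k) (fun k => IsPolynomial.proj k)
  refine c.poly h _ _ ?_
  intro k
  fin_cases k <;> assumption

theorem chooseVec_update {β : Type} {N n : ℕ} (g : Fin N → Fin n) (a b : Fin N → β)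
    (E : Fin n → Bool) (i : Fin n) :
    (fun k => if g k = i then a k else chooseVec g a b E k)
      = chooseVec g a b (Function.update E i false) := by
  funext k
  by_cases h : g k = i
  · subst h; simp [chooseVec]
  · simp [chooseVec, h]

theorem poly_fix {A : Algebra σ} {N n : ℕ} {q : (Fin N → A.carrier) → A.carrier}
    (hq : IsPolynomial A q) (g : Fin N → Fin n) (a : Fin N → A.carrier) (i : Fin n) :
    IsPolynomial A (fun x => q (fun k => if g k = i then a k else x k)) := by
  refine hq.subst (fun k x => if g k = i then a k else x k) (fun k => ?_)
  by_cases h : g k = i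
  · simpa [h] using IsPolynomial.const (a k)
  · simpa [h] using IsPolynomial.proj k

/-- A reformulation of the centralizer relation. -/
theorem centralizes_iff {A : Algebra σ} {n : ℕ} (θs : Fin (n + 1) → Con A) (δ : Con A) :
    Centralizes (fun j : Fin n => θs j.castSucc) (θs (Fin.last n)) δ ↔
    ∀ (N : ℕ) (p : (Fin N → A.carrier) → A.carrier), IsPolynomial A p →
    ∀ (g : Fin N → Fin (n + 1)) (a b : Fin N → A.carrier),
      (∀ i, (θs (g i)).r (a i) (b i)) →
      (∀ E : Fin (n + 1) → Bool, (∃ j : Fin n, E j.castSucc = false) →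
        δ.r (p (chooseVec g a b (Function.update E (Fin.last n) false)))
          (p (chooseVec g a b (Function.update E (Fin.last n) true)))) →
      δ.r (p (chooseVec g a b (Function.update (fun _ => true) (Fin.last n) false)))
          (p (chooseVec g a b (fun _ => true))) := by
  have key : ∀ (ε : Fin n → Bool) (v w : Bool) ,
      (Fin.lastCases (motive := fun _ => Bool) v ε) =
        Function.update (Fin.lastCases (motive := fun _ => Bool) w ε : Fin (n + 1) → Bool)
          (Fin.last n) v := by
    intro ε v w
    funext k
    induction k using Fin.lastCases with
    | last => simp
    | cast j => simp [Function.update_of_ne (Fin.castSucc_lt_last j).ne]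
  have keyt : (Fin.lastCases (motive := fun _ => Bool) true (fun _ => true) :
      Fin (n + 1) → Bool) = fun _ => true := lastCases_self (fun _ : Fin (n + 1) => true)
  have keyf : (Fin.lastCases (motive := fun _ => Bool) false (fun _ => true) :
      Fin (n + 1) → Bool) = Function.update (fun _ => true) (Fin.last n) false := by
    rw [key _ false true, keyt]
  unfold Centralizes
  rw [lastCases_self θs, keyt, keyf]
  refine forall_congr' fun N => forall_congr' fun p => forall_congr' fun hp =>
    forall_congr' fun g => forall_congr' fun a => forall_congr' fun b =>
    forall_congr' fun h => imp_congr ⟨fun H E hE => ?_, fun H ε hε => ?_⟩ Iff.rfl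
  · have := H (fun j => E j.castSucc) (by
      obtain ⟨j, hj⟩ := hE
      intro hh
      have := congrFun hh j
      simp [hj] at this)
    rw [key _ false (E (Fin.last n)), key _ true (E (Fin.last n)), lastCases_self E] at this
    exact this
  · have := H (Fin.lastCases (motive := fun _ => Bool) true ε) (by
      by_contra hc
      push Not at hc
      apply hε
      funext j
      have := hc j
      simpa using this)
    rw [key _ false true, key _ true true]
    simpa using this

theorem centralizes_mono {A : Algebra σ} (p : Term σ (Fin 3)) (F : Con A → Con A)
    (hF : IsWeakFTerm A F p) {n : ℕ} (θ : Con A) (θs : Fin (n + 1) → Con A)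
    (hθs : ∀ i, θs i ≤ θ) (hFθ : F θ ≤ θ) (δ γ : Con A) (hδ : F θ ≤ δ) (hδγ : δ ≤ γ)
    (hC : Centralizes (fun j : Fin n => θs j.castSucc) (θs (Fin.last n)) δ) :
    Centralizes (fun j : Fin n => θs j.castSucc) (θs (Fin.last n)) γ := by
  rw [centralizes_iff] at hC ⊢
  intro N f hf g a b hab H
  set L := Fin.last n with hL
  set e := f (chooseVec g a b (Function.update (fun _ => true) L false)) with he
  have hγ : F θ ≤ γ := fun x y h => hδγ _ _ (hδ _ _ h)
  have right : ∀ u v, θ.r u v → (F θ).r (p.eval A ![u, u, v]) v :=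
    fun u v h => (F θ).symm (hF θ v u (θ.symm h)).2
  have left : ∀ u v, θ.r u v → (F θ).r (p.eval A ![u, v, v]) u :=
    fun u v h => (hF θ u v h).1
  have cvθ : ∀ E E' : Fin (n + 1) → Bool, ∀ k,
      θ.r (chooseVec g a b E k) (chooseVec g a b E' k) := by
    intro E E' k
    have h1 := hθs _ _ _ (hab k)
    unfold chooseVec
    split_ifs
    · exact θ.refl _
    · exact θ.symm h1
    · exact h1
    · exact θ.refl _
  have eee : ∀ c : Con A, F θ ≤ c → ∀ u v, c.r u e → c.r v e →
      c.r (p.eval A ![u, v, e]) e := fun c hc u v hu hv =>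
    c.trans (c.term3 p hu hv (c.refl e)) (hc _ _ (right e e (θ.refl e)))
  have main : ∀ S : Finset (Fin (n + 1)), ∃ q : (Fin N → A.carrier) → A.carrier,
      IsPolynomial A q ∧ (∀ E, θ.r (q (chooseVec g a b E)) e) ∧
      (∀ E, (∃ i ∈ S, E i = false) → (F θ).r (q (chooseVec g a b E)) e) ∧
      (∀ E, (∃ i, E i = false) → γ.r (q (chooseVec g a b E)) e) ∧
      γ.r (q (chooseVec g a b fun _ => true)) (f (chooseVec g a b fun _ => true)) := by
    intro S
    induction S using Finset.induction_on with
    | empty =>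
      have fθ : ∀ E, θ.r (f (chooseVec g a b E)) e := fun E => θ.poly hf _ _ (cvθ _ _)
      refine ⟨fun x => p.eval A ![f x, f (fun k => if g k = L then a k else x k), e],
        IsPolynomial.term3 p hf (poly_fix hf g a L) (IsPolynomial.const e), ?_, ?_, ?_, ?_⟩
      · intro E
        simp only [chooseVec_update]
        exact eee θ hFθ _ _ (fθ _) (fθ _)
      · simp
      · rintro E ⟨i, hi⟩
        simp only [chooseVec_update]
        have hE : Function.update E L (E L) = E := Function.update_eq_self _ _
        cases hEL : E L with
        | false =>
          rw [hEL] at hE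
          rw [hE]
          exact hγ _ _ (right _ _ (fθ E))
        | true =>
          rw [hEL] at hE
          have h1 : ∃ j : Fin n, E j.castSucc = false := by
            induction i using Fin.lastCases with
            | last => rw [← hL, hEL] at hi; cases hi
            | cast j => exact ⟨j, hi⟩
          have h2 := H E h1
          rw [hE] at h2
          exact γ.trans (γ.term3 p (γ.symm h2) (γ.refl _) (γ.refl _))
            (hγ _ _ (right _ _ (fθ _)))
      · simp only [chooseVec_update]
        exact hγ _ _ (left _ _ (fθ _))
    | insert i S _ ih =>
      obtain ⟨q, hq, qθ, qF, qγ, qf⟩ := ih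
      refine ⟨fun x => p.eval A ![q x, q (fun k => if g k = i then a k else x k), e],
        IsPolynomial.term3 p hq (poly_fix hq g a i) (IsPolynomial.const e), ?_, ?_, ?_, ?_⟩
      · intro E
        simp only [chooseVec_update]
        exact eee θ hFθ _ _ (qθ _) (qθ _)
      · rintro E ⟨j, hj, hEj⟩
        simp only [chooseVec_update]
        by_cases hji : j = i
        · subst hji
          have hE : Function.update E j (E j) = E := Function.update_eq_self _ _
          rw [hEj] at hE
          rw [hE]
          exact right _ _ (qθ E)
        · have hjS : j ∈ S := (Finset.mem_insert.1 hj).resolve_left hji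
          refine eee (F θ) (fun _ _ h => h) _ _ (qF _ ⟨j, hjS, hEj⟩) (qF _ ⟨j, hjS, ?_⟩)
          rw [Function.update_of_ne hji, hEj]
      · rintro E hE
        simp only [chooseVec_update]
        exact eee γ hγ _ _ (qγ _ hE) (qγ _ ⟨i, by simp⟩)
      · simp only [chooseVec_update]
        refine γ.trans (γ.term3 p (γ.refl _) (qγ _ ⟨i, by simp⟩) (γ.refl _)) ?_
        exact γ.trans (hγ _ _ (left _ _ (qθ _))) qf
  obtain ⟨q, hq, -, qF, -, qf⟩ := main Finset.univ
  have qδ : ∀ E, (∃ i, E i = false) → δ.r (q (chooseVec g a b E)) e :=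
    fun E ⟨i, hi⟩ => hδ _ _ (qF E ⟨i, Finset.mem_univ _, hi⟩)
  have := hC N q hq g a b hab (fun E ⟨j, hj⟩ => δ.trans (qδ _ ⟨L, by simp⟩) (δ.symm (qδ _
    ⟨j.castSucc, by rw [Function.update_of_ne (Fin.castSucc_lt_last j).ne, hj]⟩)))
  exact γ.trans (hδγ _ _ (δ.trans (δ.symm (qδ _ ⟨L, by simp⟩)) this)) qf

theorem centralizes_commutator {A : Algebra σ} {n : ℕ} (α : Fin n → Con A) (β : Con A) :
    Centralizes α β (commutator α β) := by
  intro N p hp g a b hab H δ hδ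
  exact hδ N p hp g a b hab (fun ε hε => H ε hε δ hδ)

/-- The projection onto the quotient algebra. -/
def qmk {A : Algebra σ} (η : Con A) (a : A.carrier) : (quotAlg A η).carrier :=
  Quotient.mk η.toSetoid a

theorem qmk_surj {A : Algebra σ} (η : Con A) (x : (quotAlg A η).carrier) :
    ∃ a, qmk η a = x := Quotient.exists_rep x

theorem qmk_eq {A : Algebra σ} (η : Con A) {a b : A.carrier} :
    qmk η a = qmk η b ↔ η.r a b := Quotient.eq (r := η.toSetoid)

theorem qmk_interp {A : Algebra σ} (η : Con A) (o : σ.ops) (x : Fin (σ.arity o) → A.carrier) :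
    (quotAlg A η).interp o (fun i => qmk η (x i)) = qmk η (A.interp o x) := by
  refine (qmk_eq η).2 (η.compat o _ _ fun i => ?_)
  exact (qmk_eq η).1 (Quotient.out_eq (s := η.toSetoid) (qmk η (x i)))

/-- The pullback of a congruence of the quotient algebra. -/
def pull {A : Algebra σ} (η : Con A) (δ : Con (quotAlg A η)) : Con A where
  r a b := δ.r (qmk η a) (qmk η b)
  refl a := δ.refl _
  symm h := δ.symm h
  trans h h' := δ.trans h h'
  compat o x y h := by
    rw [← qmk_interp, ← qmk_interp]
    exact δ.compat o _ _ h

theorem le_pull {A : Algebra σ} (η : Con A) (δ : Con (quotAlg A η)) : η ≤ pull η δ := by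
  intro a b h
  show δ.r (qmk η a) (qmk η b)
  rw [(qmk_eq η).2 h]
  exact δ.refl _

theorem poly_lift {A : Algebra σ} (η : Con A) {N : ℕ}
    {q : (Fin N → (quotAlg A η).carrier) → (quotAlg A η).carrier}
    (hq : IsPolynomial (quotAlg A η) q) :
    ∃ p : (Fin N → A.carrier) → A.carrier, IsPolynomial A p ∧
      ∀ x, q (fun i => qmk η (x i)) = qmk η (p x) := by
  induction hq with
  | proj i => exact ⟨fun x => x i, IsPolynomial.proj i, fun _ => rfl⟩
  | const c =>
    obtain ⟨a, rfl⟩ := qmk_surj η c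
    exact ⟨fun _ => a, IsPolynomial.const a, fun _ => rfl⟩
  | app o g _ ih =>
    choose f hf hfg using ih
    refine ⟨fun x => A.interp o (fun j => f j x), IsPolynomial.app o f hf, fun x => ?_⟩
    rw [← qmk_interp]
    simp only [hfg]

theorem poly_descend {A : Algebra σ} (η : Con A) {N : ℕ}
    {p : (Fin N → A.carrier) → A.carrier} (hp : IsPolynomial A p) :
    ∃ q : (Fin N → (quotAlg A η).carrier) → (quotAlg A η).carrier,
      IsPolynomial (quotAlg A η) q ∧ ∀ x, q (fun i => qmk η (x i)) = qmk η (p x) := by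
  induction hp with
  | proj i => exact ⟨fun x => x i, IsPolynomial.proj i, fun _ => rfl⟩
  | const a => exact ⟨fun _ => qmk η a, IsPolynomial.const _, fun _ => rfl⟩
  | app o g _ ih =>
    choose f hf hfg using ih
    refine ⟨fun x => (quotAlg A η).interp o (fun j => f j x), IsPolynomial.app o f hf, fun x => ?_⟩
    rw [← qmk_interp]
    simp only [hfg]

theorem chooseVec_qmk {A : Algebra σ} (η : Con A) {N n : ℕ} (g : Fin N → Fin n)
    (a b : Fin N → A.carrier) (E : Fin n → Bool) :
    chooseVec g (fun i => qmk η (a i)) (fun i => qmk η (b i)) E =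
      fun i => qmk η (chooseVec g a b E i) := by
  funext i
  unfold chooseVec
  split_ifs <;> rfl

theorem centralizes_pull {A : Algebra σ} (η : Con A) {n : ℕ} (θs : Fin (n + 1) → Con A)
    (hη : ∀ i, η ≤ θs i) (δ : Con (quotAlg A η)) :
    Centralizes (fun j : Fin n => (θs j.castSucc).quot η (hη _))
      ((θs (Fin.last n)).quot η (hη _)) δ ↔
    Centralizes (fun j : Fin n => θs j.castSucc) (θs (Fin.last n)) (pull η δ) := by
  rw [centralizes_iff, centralizes_iff (fun i => (θs i).quot η (hη i))]
  constructor
  · intro H N p hp g a b hab h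
    obtain ⟨q, hq, hqp⟩ := poly_descend η hp
    have := H N q hq g (fun i => qmk η (a i)) (fun i => qmk η (b i)) hab
    simp only [chooseVec_qmk, hqp] at this
    exact this h
  · intro H N q hq g a b hab h
    obtain ⟨p, hp, hqp⟩ := poly_lift η hq
    choose a' ha' using fun i => qmk_surj η (a i)
    choose b' hb' using fun i => qmk_surj η (b i)
    obtain rfl : (fun i => qmk η (a' i)) = a := funext ha'
    obtain rfl : (fun i => qmk η (b' i)) = b := funext hb'
    simp only [chooseVec_qmk, hqp] at h ⊢
    exact H N p hp g a' b' hab h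

theorem pull_quot {A : Algebra σ} (η e : Con A) (h : η ≤ e) : pull η (e.quot η h) = e := rfl

end Helpers

/-- Theorem 5.8 of "On Supernilpotent Algebras": in a variety with a weak
`f`-term, if `f(θ) ≤ [θ₁,…,θₙ] ≤ θ₁∨⋯∨θₙ ≤ θ`, then (1) `C(θ₁,…,θₙ;γ)` holds iff
`[θ₁,…,θₙ] ≤ γ`, and (2) the commutator behaves well with respect to quotients. -/
theorem weak_f_term_commutator_properties {σ : Signature} (V : Algebra σ → Prop)
    (hV : IsVariety V) (p : Term σ (Fin 3)) (hp : HasWeakFTermVariety V p)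
    (A : Algebra σ) (hA : V A)
    (F : Con A → Con A) (hFmono : MonotoneCon F) (hF : IsWeakFTerm A F p)
    {m : ℕ} (θ : Con A) (θs : Fin (m + 1) → Con A)
    (hlow : F θ ≤ commList θs)
    (hmid : commList θs ≤ Con.iSup (fun i => θs i))
    (hhigh : Con.iSup (fun i => θs i) ≤ θ) :
    (∀ γ : Con A,
      Centralizes (fun j : Fin m => θs j.castSucc) (θs (Fin.last m)) γ ↔
        commList θs ≤ γ) ∧
    (∀ (η : Con A) (hη : ∀ i, η ≤ θs i),
      commList (fun i => (θs i).quot η (hη i)) =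
        (Con.sup (commList θs) η).quot η Con.le_sup_right) := by
  have hθs : ∀ i, θs i ≤ θ := fun i a b h =>
    hhigh a b (fun c hc => hc (a, b) ⟨i, h⟩)
  have hFθ : F θ ≤ θ := fun a b h => hhigh _ _ (hmid _ _ (hlow _ _ h))
  have part1 : ∀ γ : Con A,
      Centralizes (fun j : Fin m => θs j.castSucc) (θs (Fin.last m)) γ ↔
        commList θs ≤ γ := by
    intro γ
    cases m with
    | zero =>
      rw [centralizes_iff]
      constructor
      · intro H a b hab
        have hab' : (θs 0).r a b := hab
        have := H 1 (fun x => x 0) (IsPolynomial.proj 0) (fun _ => 0) (fun _ => a) (fun _ => b)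
          (fun _ => hab') (fun E ⟨j, _⟩ => j.elim0)
        simpa [chooseVec] using this
      · intro H N f hf g a b hab _
        refine γ.poly hf _ _ (fun k => ?_)
        have h0 : g k = 0 := Fin.ext (by have := (g k).isLt; simp)
        have h1 := hab k
        rw [h0] at h1
        have h2 : γ.r (a k) (b k) := H _ _ h1
        unfold chooseVec
        split_ifs
        · exact γ.refl _
        · simp_all
        · exact h2
        · simp_all
    | succ n =>
      constructor
      · intro H a b hab
        exact hab γ H
      · intro H
        exact centralizes_mono p F hF θ θs hθs hFθ _ γ hlow H (centralizes_commutator _ _)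
  refine ⟨part1, fun η hη => ?_⟩
  apply Con.ext_r
  intro x y
  obtain ⟨a, rfl⟩ := qmk_surj η x
  obtain ⟨b, rfl⟩ := qmk_surj η y
  cases m with
  | zero =>
    constructor
    · intro h c hc
      exact hc (a, b) (Or.inl h)
    · intro h
      refine h (θs 0) (fun pr hpr => ?_)
      rcases hpr with h | h
      · exact h
      · exact hη 0 _ _ h
  | succ n =>
    constructor
    · intro h e he
      have hηe : η ≤ e := fun u v huv => he (u, v) (Or.inr huv)
      have hce : commList θs ≤ e := fun u v huv => he (u, v) (Or.inl huv)
      have := (part1 e).2 hce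
      exact h (e.quot η hηe) ((centralizes_pull η θs hη _).2 this)
    · intro h δ hδ
      have h1 : commList θs ≤ pull η δ := (part1 _).1 ((centralizes_pull η θs hη δ).1 hδ)
      refine h (pull η δ) (fun pr hpr => ?_)
      rcases hpr with h | h
      · exact h1 _ _ h
      · exact le_pull η δ _ _ h

end UA
end
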